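/- arXiv:math/9903198 — 2 statements merged into one kernel-verified Lean document; each statement's English description precedes it below -/
import Mathlib

section
/- Let α ≥ 0 and let h₀ = ℝ·(x² + z² + α(2y − xz)) ⊆ L₀. Then the first prolongation of h₀ vanishes: {u ∈ L₁ : {u, x} ∈ h₀ and {u, z} ∈ h₀} = {0}. -/
noncomputable section

open MvPolynomial

/-- The polynomial algebra `L = ℝ[x, y, z]`, with `x = X 0`, `y = X 1`, `z = X 2`. -/
abbrev PL : Type := MvPolynomial (Fin 3) ℝ

/-- The Lagrange bracket
`{f,g} = f_x g_z − f_z g_x + z (f_y g_z − f_z g_y) + f g_y − g f_y` on `L`. -/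
noncomputable def lagr (f g : PL) : PL :=
  pderiv 0 f * pderiv 2 g - pderiv 2 f * pderiv 0 g
    + X 2 * (pderiv 1 f * pderiv 2 g - pderiv 2 f * pderiv 1 g)
    + f * pderiv 1 g - g * pderiv 1 f

/-- `L_p`: the span of the monomials of total weight `p + 2`, where the variables
`x, y, z` have weights `1, 2, 1` respectively. -/
def Lgrade (p : ℤ) : Submodule ℝ PL where
  carrier := {f | ∀ m ∈ f.support, (m 0 : ℤ) + 2 * m 1 + m 2 = p + 2}
  add_mem' := fun {f g} hf hg m hm => by
    rcases Finset.mem_union.mp (MvPolynomial.support_add hm) with hh | hh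
    · exact hf m hh
    · exact hg m hh
  zero_mem' := by
    intro m hm
    simp [MvPolynomial.support_zero] at hm
  smul_mem' := fun c f hf m hm => hf m (MvPolynomial.support_smul hm)

/-- `L₁ = span{x³, x²z, xz², z³, x(2y−xz), z(2y−xz)}`. -/
noncomputable def L1span : Submodule ℝ PL :=
  Submodule.span ℝ
    {X 0 ^ 3, X 0 ^ 2 * X 2, X 0 * X 2 ^ 2, X 2 ^ 3,
      X 0 * (2 * X 1 - X 0 * X 2), X 2 * (2 * X 1 - X 0 * X 2)}

/-- For `α ≥ 0` and `h₀ = ℝ·(x² + z² + α(2y − xz)) ⊆ L₀`, the first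
prolongation of `h₀` vanishes: `{u ∈ L₁ : {u,x} ∈ h₀ and {u,z} ∈ h₀} = {0}`. -/
theorem stmt13 (α : ℝ) (hα : 0 ≤ α) :
    ∀ u ∈ L1span,
      lagr u (X 0) ∈ Submodule.span ℝ
        ({X 0 ^ 2 + X 2 ^ 2 + C α * (2 * X 1 - X 0 * X 2)} : Set PL) →
      lagr u (X 2) ∈ Submodule.span ℝ
        ({X 0 ^ 2 + X 2 ^ 2 + C α * (2 * X 1 - X 0 * X 2)} : Set PL) →
      u = 0 := by
  intro u hu h1 h2
  simp only [L1span, Submodule.mem_span_insert, Submodule.mem_span_singleton] at hu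
  obtain ⟨a, _, ⟨b, _, ⟨c, _, ⟨d, _, ⟨e, _, ⟨f, rfl⟩, rfl⟩, rfl⟩, rfl⟩, rfl⟩, rfl⟩ := hu
  rw [Submodule.mem_span_singleton] at h1 h2
  obtain ⟨l, hl⟩ := h1
  obtain ⟨k, hk⟩ := h2
  have two : (2 : PL) = C 2 := (map_ofNat C 2).symm
  have H1 : ∀ x y z : ℝ, l * (x ^ 2 + z ^ 2 + α * (2 * y - x * z)) =
      -((b + e) * x ^ 2 + 2 * c * (x * z) + 3 * d * z ^ 2 + 2 * f * y) := by
    intro x y z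
    have := congrArg (eval ![x, y, z]) hl
    simp [lagr, two, smul_eq_C_mul, pderiv_X, Derivation.leibniz,
      Derivation.leibniz_pow] at this
    linear_combination this
  have H2 : ∀ x y z : ℝ, k * (x ^ 2 + z ^ 2 + α * (2 * y - x * z)) =
      3 * a * x ^ 2 + 2 * b * (x * z) + c * z ^ 2 + e * (2 * y - 2 * (x * z)) - f * z ^ 2 := by
    intro x y z
    have := congrArg (eval ![x, y, z]) hk
    simp [lagr, two, smul_eq_C_mul, pderiv_X, Derivation.leibniz,
      Derivation.leibniz_pow] at this
    linear_combination this
  have p1 := H1 1 0 0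
  have p2 := H1 0 1 0
  have p3 := H1 0 0 1
  have p4 := H1 1 0 1
  have q1 := H2 1 0 0
  have q2 := H2 0 1 0
  have q3 := H2 0 0 1
  have q4 := H2 1 0 1
  norm_num at p1 p2 p3 p4 q1 q2 q3 q4
  have he : e = k * α := by linarith
  have hb : b = k * α / 2 := by linarith
  have hf : f = -l * α := by linarith
  have hc : c = l * α / 2 := by linarith
  have hl' : l = -(3 * k * α / 2) := by linarith
  have hk0 : k * (1 + 9 / 4 * α ^ 2) = 0 := by
    have : k = 3 / 2 * l * α := by linarith
    rw [hl'] at this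
    linear_combination this
  have hk' : k = 0 := by
    rcases mul_eq_zero.mp hk0 with h | h
    · exact h
    · nlinarith [sq_nonneg α]
  subst hk'
  have l0 : l = 0 := by rw [hl']; simp
  subst l0
  have a0 : a = 0 := by linarith
  have d0 : d = 0 := by linarith
  simp [he, hb, hf, hc, a0, d0]
end
end

section
/- Let h₀ = span{x² + z², 2y − xz} ⊆ L₀. Then the first prolongation of h₀ is {u ∈ L₁ : {u, x} ∈ h₀ and {u, z} ∈ h₀} = span{x(x²+z²) − 2z(2y−xz), z(x²+z²) + 2x(2y−xz)}, and the action of h₀ on this two-dimensional space by the Lagrange bracket is irreducible. -/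
noncomputable section

open MvPolynomial

/-- `h₀ = span{x² + z², 2y − xz}`. -/
noncomputable def h0c : Submodule ℝ PL :=
  Submodule.span ℝ {X 0 ^ 2 + X 2 ^ 2, 2 * X 1 - X 0 * X 2}

/-- `span{x(x²+z²) − 2z(2y−xz), z(x²+z²) + 2x(2y−xz)}`. -/
noncomputable def W1span : Submodule ℝ PL :=
  Submodule.span ℝ
    {X 0 * (X 0 ^ 2 + X 2 ^ 2) - 2 * X 2 * (2 * X 1 - X 0 * X 2),
     X 2 * (X 0 ^ 2 + X 2 ^ 2) + 2 * X 0 * (2 * X 1 - X 0 * X 2)}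

theorem lagr_X0 (u : PL) : lagr u (X 0) = - pderiv 2 u - X 0 * pderiv 1 u := by
  simp [lagr, pderiv_X]

theorem lagr_X2 (u : PL) : lagr u (X 2) = pderiv 0 u := by
  simp [lagr, pderiv_X]

/-- The two generators of the prolongation. -/
def pGen : PL := X 0 * (X 0 ^ 2 + X 2 ^ 2) - 2 * X 2 * (2 * X 1 - X 0 * X 2)

/-- The second generator. -/
def qGen : PL := X 2 * (X 0 ^ 2 + X 2 ^ 2) + 2 * X 0 * (2 * X 1 - X 0 * X 2)

theorem mem_W1 (u : PL) : u ∈ W1span ↔ ∃ a b : ℝ, a • pGen + b • qGen = u :=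
  Submodule.mem_span_pair

theorem mem_h0 (u : PL) : u ∈ h0c ↔
    ∃ a b : ℝ, a • (X 0 ^ 2 + X 2 ^ 2 : PL) + b • (2 * X 1 - X 0 * X 2 : PL) = u :=
  Submodule.mem_span_pair

theorem mem_L1 (u : PL) : u ∈ L1span ↔ ∃ a b c d e f : ℝ,
    u = C a * X 0 ^ 3 + C b * (X 0 ^ 2 * X 2) + C c * (X 0 * X 2 ^ 2) + C d * X 2 ^ 3
      + C e * (X 0 * (2 * X 1 - X 0 * X 2)) + C f * (X 2 * (2 * X 1 - X 0 * X 2)) := by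
  unfold L1span
  simp only [Submodule.mem_span_insert, Submodule.mem_span_singleton, smul_eq_C_mul]
  constructor
  · rintro ⟨a, _, ⟨b, _, ⟨c, _, ⟨d, _, ⟨e, _, ⟨f, rfl⟩, rfl⟩, rfl⟩, rfl⟩, rfl⟩, rfl⟩
    exact ⟨a, b, c, d, e, f, by ring⟩
  · rintro ⟨a, b, c, d, e, f, rfl⟩
    exact ⟨a, _, ⟨b, _, ⟨c, _, ⟨d, _, ⟨e, _, ⟨f, rfl⟩, rfl⟩, rfl⟩, rfl⟩, rfl⟩, by ring⟩

theorem C_two : (C 2 : PL) = 2 := map_ofNat C 2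

theorem C_three : (C 3 : PL) = 3 := map_ofNat C 3

theorem pd_two (i : Fin 3) : pderiv i (2 : PL) = 0 := by
  rw [← C_two, pderiv_C]

theorem prolong_iff (u : PL) :
    (u ∈ L1span ∧ lagr u (X 0) ∈ h0c ∧ lagr u (X 2) ∈ h0c) ↔ u ∈ W1span := by
  rw [lagr_X0, lagr_X2, mem_L1, mem_h0, mem_h0, mem_W1]
  constructor
  · rintro ⟨⟨a, b, c, d, e, f, rfl⟩, ⟨m, n, h1⟩, ⟨k, l, h2⟩⟩
    have E1 := fun v : Fin 3 → ℝ => congrArg (eval v) h1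
    have E2 := fun v : Fin 3 → ℝ => congrArg (eval v) h2
    clear h1 h2
    simp [pderiv_X, pd_two, smul_eval] at E1 E2
    have a1 := E1 ![1, 0, 0]
    have a2 := E1 ![0, 0, 1]
    have a3 := E1 ![1, 0, 1]
    have a4 := E1 ![0, 1, 0]
    have b1 := E2 ![1, 0, 0]
    have b2 := E2 ![0, 0, 1]
    have b3 := E2 ![1, 0, 1]
    have b4 := E2 ![0, 1, 0]
    simp at a1 a2 a3 a4 b1 b2 b3 b4
    have he : e = 2 * b := by linarith
    have hd : d = b := by linarith
    have hf : f = -2 * c := by linarith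
    have ha : a = c := by linarith
    refine ⟨c, b, ?_⟩
    subst he hd hf ha
    simp only [pGen, qGen, smul_eq_C_mul, map_mul, map_neg, map_ofNat]
    ring
  · rintro ⟨c, b, rfl⟩
    refine ⟨⟨c, b, c, b, 2 * b, -2 * c, ?_⟩, ⟨-3 * b, 2 * c, ?_⟩, ⟨3 * c, 2 * b, ?_⟩⟩
    · simp only [pGen, qGen, smul_eq_C_mul, map_mul, map_neg, map_ofNat]
      ring
    · simp [pGen, qGen, smul_eq_C_mul, pderiv_X, pd_two, C_two, C_three]
      ring
    · simp [pGen, qGen, smul_eq_C_mul, pderiv_X, pd_two, C_two, C_three]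
      ring

theorem indep_pq : LinearIndependent ℝ ![pGen, qGen] := by
  rw [LinearIndependent.pair_iff]
  intro s t h
  have E := fun v : Fin 3 → ℝ => congrArg (eval v) h
  simp [pGen, qGen, smul_eval] at E
  have a1 := E ![1, 0, 0]
  have a2 := E ![0, 0, 1]
  simp at a1 a2
  exact ⟨a1, a2⟩

theorem finrank_W1 : Module.finrank ℝ ↥W1span = 2 := by
  have h : W1span = Submodule.span ℝ (Set.range ![pGen, qGen]) := by
    rw [Matrix.range_cons_cons_empty]
    rfl
  rw [h, finrank_span_eq_card indep_pq]
  simp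

theorem rot_pq (a b : ℝ) : lagr (X 0 ^ 2 + X 2 ^ 2) (a • pGen + b • qGen)
    = (2 * b) • pGen + (-2 * a) • qGen := by
  simp [lagr, pGen, qGen, smul_eq_C_mul, pderiv_X, pd_two, C_two, C_three]
  ring

theorem irred_W1 (W : Submodule ℝ PL) (hW : W ≤ W1span)
    (hinv : ∀ v ∈ h0c, ∀ w ∈ W, lagr v w ∈ W) : W = ⊥ ∨ W = W1span := by
  by_cases hb : W = ⊥
  · exact Or.inl hb
  right
  obtain ⟨w, hw, hw0⟩ := W.ne_bot_iff.mp hb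
  obtain ⟨a, b, rfl⟩ := (mem_W1 w).mp (hW hw)
  have hJ := hinv (X 0 ^ 2 + X 2 ^ 2) (Submodule.subset_span (by simp)) _ hw
  rw [rot_pq] at hJ
  have hN : a ^ 2 + b ^ 2 ≠ 0 := by
    intro h
    have ha : a = 0 := by nlinarith [sq_nonneg a, sq_nonneg b]
    have hb' : b = 0 := by nlinarith [sq_nonneg a, sq_nonneg b]
    exact hw0 (by simp [ha, hb'])
  refine le_antisymm hW fun u hu => ?_
  obtain ⟨c, d, rfl⟩ := (mem_W1 u).mp hu
  have key : c • pGen + d • qGen = ((a * c + b * d) / (a ^ 2 + b ^ 2)) • (a • pGen + b • qGen)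
      + ((b * c - a * d) / (2 * (a ^ 2 + b ^ 2))) • ((2 * b) • pGen + (-2 * a) • qGen) := by
    match_scalars <;> field_simp <;> ring
  rw [key]
  exact W.add_mem (W.smul_mem _ hw) (W.smul_mem _ hJ)

/-- For `h₀ = span{x²+z², 2y−xz}`, the first prolongation of `h₀` is
`{u ∈ L₁ : {u,x} ∈ h₀ and {u,z} ∈ h₀} = span{x(x²+z²) − 2z(2y−xz), z(x²+z²) + 2x(2y−xz)}`,
a two-dimensional space on which `h₀` acts irreducibly via the Lagrange bracket. -/
theorem stmt14 :
    (∀ u : PL, (u ∈ L1span ∧ lagr u (X 0) ∈ h0c ∧ lagr u (X 2) ∈ h0c) ↔ u ∈ W1span) ∧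
    Module.finrank ℝ ↥W1span = 2 ∧
    (∀ W : Submodule ℝ PL, W ≤ W1span →
      (∀ v ∈ h0c, ∀ w ∈ W, lagr v w ∈ W) → W = ⊥ ∨ W = W1span) := by
  exact ⟨prolong_iff, finrank_W1, irred_W1⟩
end
end
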